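/- arXiv:1411.2374 — 2 statements merged into one kernel-verified Lean document; each statement's English description precedes it below -/
import Mathlib

section
/- Let (h_k)_{k≥0} be a sequence of nonnegative reals and C > 0 such that for every k ≥ 0 and every γ ∈ [0,1], h_{k+1} ≤ (1 − γ) h_k + (γ²/2) C. Then for every k ≥ 1, h_k ≤ 2C/(k + 2). -/
/-!
The step sizes `γ_k = 2 / (k + 2)` alone give the rate. As `γ_0 = 1`, the first step forgets `h 0`
and leaves `h 1 ≤ C / 2`. With `t = k + 2`, a step with `γ = 2 / t` sends the bound `2 * C / t` to
`2 * C * (t - 1) / t ^ 2`, which is at most `2 * C / (t + 1)` because `(t - 1) * (t + 1) ≤ t ^ 2`.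
-/

section

variable {𝕜 : Type*} [Field 𝕜] [LinearOrder 𝕜] [IsStrictOrderedRing 𝕜]

theorem two_div_natCast_add_two_mem_Icc (k : ℕ) : 2 / ((k : 𝕜) + 2) ∈ Set.Icc (0 : 𝕜) 1 :=
  ⟨by positivity, div_le_one_of_le₀ (le_add_of_nonneg_left k.cast_nonneg) (by positivity)⟩

theorem sub_one_div_sq_le_one_div_add_one {t : 𝕜} (ht : 0 < t) :
    (t - 1) / t ^ 2 ≤ 1 / (t + 1) := by
  rw [div_le_div_iff₀ (by positivity) (by positivity)]
  linarith

theorem one_sub_two_div_mul_add_le_two_mul_div_add_one {C t : 𝕜} (hC : 0 ≤ C) (ht : 0 < t) :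
    (1 - 2 / t) * (2 * C / t) + (2 / t) ^ 2 / 2 * C ≤ 2 * C / (t + 1) := by
  calc (1 - 2 / t) * (2 * C / t) + (2 / t) ^ 2 / 2 * C
      = 2 * C * ((t - 1) / t ^ 2) := by field_simp; ring
    _ ≤ 2 * C * (1 / (t + 1)) :=
      mul_le_mul_of_nonneg_left (sub_one_div_sq_le_one_div_add_one ht) (by positivity)
    _ = 2 * C / (t + 1) := mul_one_div _ _

theorem frank_wolfe_rate_general {h : ℕ → 𝕜} {C : 𝕜} (hC : 0 ≤ C)
    (hrec : ∀ k : ℕ,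
      h (k + 1) ≤ (1 - 2 / ((k : 𝕜) + 2)) * h k + (2 / ((k : 𝕜) + 2)) ^ 2 / 2 * C)
    {k : ℕ} (hk : 1 ≤ k) : h k ≤ 2 * C / (k + 2) := by
  induction k, hk using Nat.le_induction with
  | base =>
    have first_step : h 1 ≤ C / 2 := by simpa [div_eq_inv_mul] using hrec 0
    norm_num
    linarith
  | succ k _ ih =>
    have weight_nonneg : 0 ≤ 1 - 2 / ((k : 𝕜) + 2) :=
      sub_nonneg.2 (two_div_natCast_add_two_mem_Icc k).2
    calc h (k + 1)
        ≤ (1 - 2 / ((k : 𝕜) + 2)) * h k + (2 / ((k : 𝕜) + 2)) ^ 2 / 2 * C := hrec k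
      _ ≤ (1 - 2 / ((k : 𝕜) + 2)) * (2 * C / (k + 2)) + (2 / ((k : 𝕜) + 2)) ^ 2 / 2 * C := by
        gcongr
      _ ≤ 2 * C / ((k : 𝕜) + 2 + 1) :=
        one_sub_two_div_mul_add_le_two_mul_div_add_one hC (by positivity)
      _ = 2 * C / ((k + 1 : ℕ) + 2) := by push_cast; ring

end

/-- The standard Frank–Wolfe recursion: if a sequence of nonnegative reals satisfies
`h_{k+1} ≤ (1 − γ)·h_k + (γ²/2)·C` for every `γ ∈ [0,1]`, then `h_k ≤ 2C/(k+2)`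
for every `k ≥ 1`. -/
theorem frank_wolfe_rate (h : ℕ → ℝ) (C : ℝ) (hC : 0 < C)
    (hnonneg : ∀ k, 0 ≤ h k)
    (hrec : ∀ k, ∀ γ ∈ Set.Icc (0:ℝ) 1, h (k + 1) ≤ (1 - γ) * h k + γ^2 / 2 * C) :
    ∀ k : ℕ, 1 ≤ k → h k ≤ 2 * C / (k + 2) := fun _ hk =>
  frank_wolfe_rate_general hC.le (fun k => hrec k _ (two_div_natCast_add_two_mem_Icc k)) hk
end

section
/- Let λ > 0, let A¹,…,A^T be d×d real matrices, L = (1/T) Σ_{t=1}^T ‖A^t‖_F², f(M) = (1/T) Σ_{t=1}^T ℓ(⟨A^t, M⟩), and let M* minimize f over D_λ = conv(B_λ). Let (M^{(k)})_{k≥0} be any sequence in D_λ with M^{(0)} ∈ B_λ such that for every k, choosing B^{(k)} ∈ argmin_{B ∈ B_λ} ⟨B, ∇f(M^{(k)})⟩, the next iterate satisfies f(M^{(k+1)}) ≤ f(M^{(k)} + γ (B^{(k)} − M^{(k)})) for all γ ∈ [0,1]. Then for every k ≥ 1, f(M^{(k)}) − f(M*) ≤ 16 L λ² / (k + 2). 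-/
/-- The smoothed hinge loss. -/
noncomputable def smoothedHinge (x : ℝ) : ℝ :=
  if 1 ≤ x then 0 else if x ≤ 0 then 1/2 - x else (1/2) * (1 - x)^2

/-- The Frobenius inner product of two d×d real matrices. -/
def frobInner {d : ℕ} (A M : Matrix (Fin d) (Fin d) ℝ) : ℝ :=
  ∑ a, ∑ b, A a b * M a b

/-- The Frobenius norm of a matrix. -/
noncomputable def frobNorm {d : ℕ} (A : Matrix (Fin d) (Fin d) ℝ) : ℝ :=
  Real.sqrt (frobInner A A)

/-- The basis element `P_λ^{(ij)} = λ (e_i + e_j)(e_i + e_j)ᵀ`. -/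
noncomputable def Pbasis (d : ℕ) (lam : ℝ) (i j : Fin d) : Matrix (Fin d) (Fin d) ℝ :=
  lam • Matrix.vecMulVec (Pi.single i 1 + Pi.single j 1) (Pi.single i 1 + Pi.single j 1)

/-- The basis element `N_λ^{(ij)} = λ (e_i − e_j)(e_i − e_j)ᵀ`. -/
noncomputable def Nbasis (d : ℕ) (lam : ℝ) (i j : Fin d) : Matrix (Fin d) (Fin d) ℝ :=
  lam • Matrix.vecMulVec (Pi.single i 1 - Pi.single j 1) (Pi.single i 1 - Pi.single j 1)

/-- The basis set `B_λ = ⋃_{i≠j} {P_λ^{(ij)}, N_λ^{(ij)}}`. -/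
noncomputable def basisSet (d : ℕ) (lam : ℝ) : Set (Matrix (Fin d) (Fin d) ℝ) :=
  {B | ∃ i j : Fin d, i ≠ j ∧ (B = Pbasis d lam i j ∨ B = Nbasis d lam i j)}

/-- The objective `f(M) = (1/T) Σ_t ℓ(⟨Aᵗ, M⟩)`. -/
noncomputable def objective {d T : ℕ} (A : Fin T → Matrix (Fin d) (Fin d) ℝ)
    (M : Matrix (Fin d) (Fin d) ℝ) : ℝ :=
  (1 / (T : ℝ)) * ∑ t, smoothedHinge (frobInner (A t) M)

/-- The gradient `∇f(M) = (1/T) Σ_t Gᵗ` of the objective. -/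
noncomputable def objectiveGrad {d T : ℕ} (A : Fin T → Matrix (Fin d) (Fin d) ℝ)
    (M : Matrix (Fin d) (Fin d) ℝ) : Matrix (Fin d) (Fin d) ℝ :=
  (1 / (T : ℝ)) • ∑ t, (if 1 ≤ frobInner (A t) M then 0
    else if frobInner (A t) M ≤ 0 then -(A t)
    else (frobInner (A t) M - 1) • A t)

/- The objective is convex and `L`-smooth for the Frobenius norm, and the atoms in `B_λ` have
squared norm `4λ²` and pairwise nonnegative inner products, so `conv(B_λ)` has squared diameter at
most `8λ²`. Hence a step of size `γ` changes the gap `h` to at most `(1 - γ) h + γ²/2 · 8Lλ²`, and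
the sizes `γ_k = 2/(k+2)`, whose first value `1` erases the initial gap, give
`h_k ≤ 2 · 8Lλ² / (k+2)`. -/

open scoped RealInnerProductSpace

section FrankWolfe

lemma two_div_add_two_mem_Icc (k : ℕ) : (2 / (k + 2) : ℝ) ∈ Set.Icc (0 : ℝ) 1 :=
  ⟨by positivity, by rw [div_le_one (by positivity)]; linarith [k.cast_nonneg (α := ℝ)]⟩

lemma le_two_mul_div_of_frankWolfe_recurrence {h : ℕ → ℝ} {C : ℝ} (hC : 0 ≤ C)
    (hrec : ∀ k : ℕ, h (k + 1) ≤ (1 - 2 / (k + 2)) * h k + (2 / (k + 2)) ^ 2 / 2 * C)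
    {k : ℕ} (hk : 1 ≤ k) : h k ≤ 2 * C / (k + 2) := by
  induction k, hk using Nat.le_induction with
  | base =>
    have h₁ := hrec 0
    norm_num at h₁ ⊢
    linarith
  | succ k _ ih =>
    have hγ : (0 : ℝ) ≤ 1 - 2 / (k + 2) := sub_nonneg.2 (two_div_add_two_mem_Icc k).2
    have hfrac : ((k : ℝ) + 1) / (k + 2) ^ 2 ≤ 1 / (k + 3) := by
      rw [div_le_div_iff₀ (by positivity) (by positivity)]
      linarith
    calc h (k + 1) ≤ (1 - 2 / (k + 2)) * h k + (2 / (k + 2)) ^ 2 / 2 * C := hrec k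
      _ ≤ (1 - 2 / (k + 2)) * (2 * C / (k + 2)) + (2 / (k + 2)) ^ 2 / 2 * C := by gcongr
      _ = 2 * C * ((k + 1) / (k + 2) ^ 2) := by field_simp; ring
      _ ≤ 2 * C * (1 / (k + 3)) := by gcongr
      _ = 2 * C / ((k + 1 : ℕ) + 2) := by push_cast; ring

variable {E : Type*} [AddCommGroup E] [Module ℝ E]

/-- `C` is an upper bound for the curvature constant of `f` over `conv S`, as used in the analysis
of Frank–Wolfe methods. The functional `f' x` plays the role of the derivative of `f` at `x`, but no
differentiability is built in, so that `E` need not carry a topology. -/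
def IsCurvatureBound (f : E → ℝ) (f' : E → Module.Dual ℝ E) (S : Set E) (C : ℝ) : Prop :=
  ∀ x ∈ convexHull ℝ S, ∀ s ∈ S, ∀ γ ∈ Set.Icc (0 : ℝ) 1,
    f (x + γ • (s - x)) ≤ f x + γ * f' x (s - x) + γ ^ 2 / 2 * C

variable {f : E → ℝ} {f' : E → Module.Dual ℝ E} {S : Set E} {C : ℝ}

lemma isMinOn_convexHull {φ : Module.Dual ℝ E} {s : E} (hs : IsMinOn φ S s) :
    IsMinOn φ (convexHull ℝ S) s :=
  convexHull_min hs (convex_halfSpace_ge φ.isLinear (φ s))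

lemma IsCurvatureBound.gap_le (hC : IsCurvatureBound f f' S C) {x y s : E} {γ : ℝ}
    (hx : x ∈ convexHull ℝ S) (hy : y ∈ convexHull ℝ S) (hconv : f x + f' x (y - x) ≤ f y)
    (hs : s ∈ S) (hmin : IsMinOn (f' x) S s) (hγ : γ ∈ Set.Icc (0 : ℝ) 1) :
    f (x + γ • (s - x)) - f y ≤ (1 - γ) * (f x - f y) + γ ^ 2 / 2 * C := by
  have hdir : f' x (s - x) ≤ f y - f x := by
    have hsy : f' x s ≤ f' x y := isMinOn_convexHull hmin hy
    rw [map_sub] at hconv ⊢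
    linarith
  linarith [hC x hx s hs γ hγ, mul_le_mul_of_nonneg_left hdir hγ.1]

theorem IsCurvatureBound.frankWolfe_gap_le (hC : IsCurvatureBound f f' S C) (hC₀ : 0 ≤ C)
    (hconv : ∀ x ∈ convexHull ℝ S, ∀ y ∈ convexHull ℝ S, f x + f' x (y - x) ≤ f y)
    {x : ℕ → E} {y : E} (hx : ∀ k, x k ∈ convexHull ℝ S) (hy : y ∈ convexHull ℝ S)
    (hstep : ∀ k : ℕ, ∃ s ∈ S, IsMinOn (f' (x k)) S s ∧
      f (x (k + 1)) ≤ f (x k + (2 / (k + 2) : ℝ) • (s - x k)))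
    {k : ℕ} (hk : 1 ≤ k) : f (x k) - f y ≤ 2 * C / (k + 2) := by
  refine le_two_mul_div_of_frankWolfe_recurrence (h := fun k ↦ f (x k) - f y) hC₀ (fun k ↦ ?_) hk
  obtain ⟨s, hs, hmin, hdesc⟩ := hstep k
  exact (sub_le_sub_right hdesc _).trans
    (hC.gap_le (hx k) hy (hconv _ (hx k) _ hy) hs hmin (two_div_add_two_mem_Icc k))

end FrankWolfe

section Smooth

lemma IsCurvatureBound.of_smooth {E : Type*} [SeminormedAddCommGroup E] [NormedSpace ℝ E]
    {f : E → ℝ} {f' : E → Module.Dual ℝ E} {S : Set E} {L D : ℝ} (hL : 0 ≤ L)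
    (hsmooth : ∀ x v, f (x + v) ≤ f x + f' x v + L / 2 * ‖v‖ ^ 2)
    (hdiam : ∀ s ∈ S, ∀ t ∈ S, ‖s - t‖ ^ 2 ≤ D) : IsCurvatureBound f f' S (L * D) := by
  intro x hx s hs γ _
  have hsx : ‖s - x‖ ^ 2 ≤ D := by
    obtain ⟨t, ht, hxt⟩ := convexHull_exists_dist_ge hx s
    rw [dist_comm x, dist_comm t, dist_eq_norm, dist_eq_norm] at hxt
    exact (by gcongr : ‖s - x‖ ^ 2 ≤ ‖s - t‖ ^ 2).trans (hdiam s hs t ht)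
  calc f (x + γ • (s - x))
      ≤ f x + f' x (γ • (s - x)) + L / 2 * ‖γ • (s - x)‖ ^ 2 := hsmooth x _
    _ = f x + γ * f' x (s - x) + γ ^ 2 / 2 * (L * ‖s - x‖ ^ 2) := by
        rw [map_smul, smul_eq_mul, norm_smul, mul_pow, Real.norm_eq_abs, sq_abs]
        ring
    _ ≤ f x + γ * f' x (s - x) + γ ^ 2 / 2 * (L * D) := by gcongr

lemma norm_sub_sq_le_of_inner_nonneg {E : Type*} [SeminormedAddCommGroup E] [InnerProductSpace ℝ E]
    {x y : E} (h : 0 ≤ ⟪x, y⟫) : ‖x - y‖ ^ 2 ≤ ‖x‖ ^ 2 + ‖y‖ ^ 2 := by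
  linarith [norm_sub_sq_real x y]

end Smooth

section SmoothedHinge

/-- The derivative of the smoothed hinge loss, the coefficient of `Aᵗ` in each summand of
`objectiveGrad`. -/
noncomputable def smoothedHingeDeriv (x : ℝ) : ℝ :=
  if 1 ≤ x then 0 else if x ≤ 0 then -1 else x - 1

lemma neg_smoothedHingeDeriv_mem_Icc (x : ℝ) : -smoothedHingeDeriv x ∈ Set.Icc (0 : ℝ) 1 := by
  unfold smoothedHingeDeriv
  split_ifs <;> constructor <;> linarith

lemma smoothedHinge_eq_deriv (x : ℝ) :
    smoothedHinge x = -smoothedHingeDeriv x * (1 - x) - smoothedHingeDeriv x ^ 2 / 2 := by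
  unfold smoothedHinge smoothedHingeDeriv
  split_ifs <;> ring

/- The maximum in the dual formula `ℓ(x) = max_{q ∈ [0,1]} q (1 - x) - q²/2` is attained at minus
the derivative; the extra square is the strong concavity of the maximand. -/
lemma dual_add_sq_le_smoothedHinge {q : ℝ} (hq : q ∈ Set.Icc (0 : ℝ) 1) (x : ℝ) :
    q * (1 - x) - q ^ 2 / 2 + (q + smoothedHingeDeriv x) ^ 2 / 2 ≤ smoothedHinge x := by
  obtain ⟨hq₀, hq₁⟩ := hq
  unfold smoothedHinge smoothedHingeDeriv
  split_ifs <;> nlinarith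

lemma smoothedHinge_add_deriv_mul_le (x y : ℝ) :
    smoothedHinge x + smoothedHingeDeriv x * (y - x) ≤ smoothedHinge y := by
  linarith [smoothedHinge_eq_deriv x,
    dual_add_sq_le_smoothedHinge (neg_smoothedHingeDeriv_mem_Icc x) y,
    sq_nonneg (-smoothedHingeDeriv x + smoothedHingeDeriv y)]

lemma smoothedHinge_add_le (x v : ℝ) :
    smoothedHinge (x + v) ≤ smoothedHinge x + smoothedHingeDeriv x * v + v ^ 2 / 2 := by
  linarith [smoothedHinge_eq_deriv (x + v),
    dual_add_sq_le_smoothedHinge (neg_smoothedHingeDeriv_mem_Icc (x + v)) x,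
    sq_nonneg (v + smoothedHingeDeriv x - smoothedHingeDeriv (x + v))]

end SmoothedHinge

section Frobenius

variable {d T : ℕ}

/-- The Frobenius inner product as an inner product core, chosen so that the inner product and the
norm built from it are definitionally `frobInner` and `frobNorm`. -/
noncomputable abbrev frobCore (d : ℕ) : InnerProductSpace.Core ℝ (Matrix (Fin d) (Fin d) ℝ) where
  inner := frobInner
  conj_inner_symm X Y := by simp [frobInner, mul_comm]
  re_inner_nonneg X := by
    change 0 ≤ frobInner X X
    exact Finset.sum_nonneg fun _ _ ↦ Finset.sum_nonneg fun _ _ ↦ mul_self_nonneg _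
  add_left X Y Z := by simp [frobInner, add_mul, Finset.sum_add_distrib]
  smul_left X Y c := by simp [frobInner, Finset.mul_sum, mul_assoc]
  definite X hX := by
    change frobInner X X = 0 at hX
    ext a b
    rw [frobInner, ← Fintype.sum_prod_type', Fintype.sum_eq_zero_iff_of_nonneg
      fun _ ↦ mul_self_nonneg _] at hX
    exact mul_self_eq_zero.1 (congrFun hX (a, b))

/-- The Frobenius norm on matrices; local, since Mathlib fixes no global matrix norm. -/
noncomputable local instance : NormedAddCommGroup (Matrix (Fin d) (Fin d) ℝ) :=
  (frobCore d).toNormedAddCommGroup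

/-- The Frobenius inner product on matrices, compatible with the local Frobenius norm. -/
noncomputable local instance : InnerProductSpace ℝ (Matrix (Fin d) (Fin d) ℝ) :=
  .ofCore (frobCore d).toCore

lemma inner_eq_frobInner (X Y : Matrix (Fin d) (Fin d) ℝ) : ⟪X, Y⟫ = frobInner X Y := rfl

lemma norm_eq_frobNorm (X : Matrix (Fin d) (Fin d) ℝ) : ‖X‖ = frobNorm X := rfl

section BasisSet

lemma inner_smul_vecMulVec_self (c : ℝ) (u v : Fin d → ℝ) :
    ⟪c • Matrix.vecMulVec u u, c • Matrix.vecMulVec v v⟫ = c ^ 2 * (u ⬝ᵥ v) ^ 2 := by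
  simp only [real_inner_smul_left, real_inner_smul_right, inner_eq_frobInner, frobInner,
    Matrix.vecMulVec_apply, dotProduct, pow_two, Finset.sum_mul_sum, mul_mul_mul_comm (u _) (u _),
    mul_assoc c c]

lemma exists_eq_smul_vecMulVec_of_mem_basisSet {lam : ℝ} {B : Matrix (Fin d) (Fin d) ℝ}
    (hB : B ∈ basisSet d lam) :
    ∃ u : Fin d → ℝ, u ⬝ᵥ u = 2 ∧ B = lam • Matrix.vecMulVec u u := by
  obtain ⟨i, j, hij, rfl | rfl⟩ := hB <;>
    exact ⟨_, by simp [hij, hij.symm, one_add_one_eq_two], rfl⟩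

lemma norm_sub_sq_le_of_mem_basisSet {lam : ℝ} {B C : Matrix (Fin d) (Fin d) ℝ}
    (hB : B ∈ basisSet d lam) (hC : C ∈ basisSet d lam) : ‖B - C‖ ^ 2 ≤ 8 * lam ^ 2 := by
  obtain ⟨u, hu, rfl⟩ := exists_eq_smul_vecMulVec_of_mem_basisSet hB
  obtain ⟨v, hv, rfl⟩ := exists_eq_smul_vecMulVec_of_mem_basisSet hC
  refine (norm_sub_sq_le_of_inner_nonneg ?_).trans_eq ?_
  · rw [inner_smul_vecMulVec_self]
    positivity
  · rw [← real_inner_self_eq_norm_sq, ← real_inner_self_eq_norm_sq, inner_smul_vecMulVec_self,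
      inner_smul_vecMulVec_self, hu, hv]
    ring

end BasisSet

section Objective

/-- The constant `L = (1/T) Σ_t ‖Aᵗ‖_F²`, a Lipschitz constant for the gradient of the objective. -/
noncomputable def smoothnessConst (A : Fin T → Matrix (Fin d) (Fin d) ℝ) : ℝ :=
  (1 / (T : ℝ)) * ∑ t, frobNorm (A t) ^ 2

variable (A : Fin T → Matrix (Fin d) (Fin d) ℝ)

lemma smoothnessConst_nonneg : 0 ≤ smoothnessConst A := by
  unfold smoothnessConst
  positivity

lemma inner_objectiveGrad (M V : Matrix (Fin d) (Fin d) ℝ) :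
    ⟪objectiveGrad A M, V⟫ =
      (1 / (T : ℝ)) * ∑ t, smoothedHingeDeriv (frobInner (A t) M) * frobInner (A t) V := by
  simp only [objectiveGrad, real_inner_smul_left, sum_inner]
  congr! 2 with t
  unfold smoothedHingeDeriv
  split_ifs <;> simp [real_inner_smul_left, inner_eq_frobInner]

lemma objective_add_inner_grad_le (M N : Matrix (Fin d) (Fin d) ℝ) :
    objective A M + ⟪objectiveGrad A M, N - M⟫ ≤ objective A N := by
  rw [inner_objectiveGrad, objective, objective, ← mul_add, ← Finset.sum_add_distrib]
  gcongr with t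
  rw [← inner_eq_frobInner _ (N - M), inner_sub_right]
  exact smoothedHinge_add_deriv_mul_le _ _

lemma objective_add_le (M V : Matrix (Fin d) (Fin d) ℝ) :
    objective A (M + V) ≤
      objective A M + ⟪objectiveGrad A M, V⟫ + smoothnessConst A / 2 * ‖V‖ ^ 2 := by
  have hloss (t : Fin T) : smoothedHinge (frobInner (A t) (M + V)) ≤
      smoothedHinge (frobInner (A t) M) + smoothedHingeDeriv (frobInner (A t) M) * frobInner (A t) V
        + frobNorm (A t) ^ 2 * (‖V‖ ^ 2 / 2) := by
    have hCS : frobInner (A t) V ^ 2 ≤ frobNorm (A t) ^ 2 * ‖V‖ ^ 2 := by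
      rw [← inner_eq_frobInner, ← norm_eq_frobNorm, ← mul_pow, ← sq_abs ⟪A t, V⟫]
      gcongr
      exact abs_real_inner_le_norm (A t) V
    have hadd : frobInner (A t) (M + V) = frobInner (A t) M + frobInner (A t) V :=
      inner_add_right (A t) M V
    rw [hadd]
    linarith [smoothedHinge_add_le (frobInner (A t) M) (frobInner (A t) V)]
  calc objective A (M + V)
      ≤ (1 / (T : ℝ)) * ∑ t, (smoothedHinge (frobInner (A t) M)
          + smoothedHingeDeriv (frobInner (A t) M) * frobInner (A t) V
          + frobNorm (A t) ^ 2 * (‖V‖ ^ 2 / 2)) := by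
        unfold objective
        gcongr with t
        exact hloss t
    _ = objective A M + ⟪objectiveGrad A M, V⟫ + smoothnessConst A / 2 * ‖V‖ ^ 2 := by
        rw [inner_objectiveGrad, objective, smoothnessConst, Finset.sum_add_distrib,
          Finset.sum_add_distrib, ← Finset.sum_mul]
        ring

lemma isCurvatureBound_objective (lam : ℝ) :
    IsCurvatureBound (objective A) (fun M ↦ innerₗ _ (objectiveGrad A M)) (basisSet d lam)
      (smoothnessConst A * (8 * lam ^ 2)) :=
  .of_smooth (smoothnessConst_nonneg A) (objective_add_le A)
    fun _ hB _ hC ↦ norm_sub_sq_le_of_mem_basisSet hB hC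

end Objective

theorem hdsl_frank_wolfe_convergence_general (lam : ℝ)
    (A : Fin T → Matrix (Fin d) (Fin d) ℝ)
    (L : ℝ) (hL : L = (1 / (T : ℝ)) * ∑ t, frobNorm (A t) ^ 2)
    (N : Matrix (Fin d) (Fin d) ℝ) (hN : N ∈ convexHull ℝ (basisSet d lam))
    (M : ℕ → Matrix (Fin d) (Fin d) ℝ) (hM : ∀ k, M k ∈ convexHull ℝ (basisSet d lam))
    (hstep : ∀ k : ℕ, ∃ B ∈ basisSet d lam,
      (∀ B' ∈ basisSet d lam,
        frobInner B (objectiveGrad A (M k)) ≤ frobInner B' (objectiveGrad A (M k))) ∧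
      objective A (M (k + 1)) ≤ objective A (M k + (2 / (k + 2) : ℝ) • (B - M k)))
    (k : ℕ) (hk : 1 ≤ k) :
    objective A (M k) - objective A N ≤ 16 * L * lam ^ 2 / (k + 2) := by
  have hL₀ : 0 ≤ L := hL ▸ smoothnessConst_nonneg A
  have hcurv := isCurvatureBound_objective A lam
  rw [smoothnessConst, ← hL] at hcurv
  have hstep' (k : ℕ) : ∃ B ∈ basisSet d lam,
      IsMinOn (innerₗ _ (objectiveGrad A (M k))) (basisSet d lam) B ∧
      objective A (M (k + 1)) ≤ objective A (M k + (2 / (k + 2) : ℝ) • (B - M k)) := by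
    obtain ⟨B, hB, hmin, hdesc⟩ := hstep k
    refine ⟨B, hB, fun B' hB' ↦ ?_, hdesc⟩
    change ⟪objectiveGrad A (M k), B⟫ ≤ ⟪objectiveGrad A (M k), B'⟫
    rw [real_inner_comm B, real_inner_comm B']
    exact hmin B' hB'
  calc objective A (M k) - objective A N ≤ 2 * (L * (8 * lam ^ 2)) / (k + 2) :=
        hcurv.frankWolfe_gap_le (by positivity)
          (fun M _ N _ ↦ objective_add_inner_grad_le A M N) hM hN hstep' hk
    _ = 16 * L * lam ^ 2 / (k + 2) := by ring

end Frobenius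

/-- Convergence of the Frank–Wolfe iterates for the similarity learning problem:
if the iterates `M^{(k)}` stay in `D_λ = conv(B_λ)`, start at a basis element, and each
step does at least as well as exact line search towards the forward direction
`B^{(k)} ∈ argmin_{B ∈ B_λ} ⟨B, ∇f(M^{(k)})⟩`, then
`f(M^{(k)}) − f(M*) ≤ 16Lλ²/(k+2)` for all `k ≥ 1`, where
`L = (1/T) Σ_t ‖Aᵗ‖_F²` and `M*` minimizes `f` over `D_λ`. -/
theorem hdsl_frank_wolfe_convergence {d T : ℕ} (lam : ℝ) (hlam : 0 < lam)
    (A : Fin T → Matrix (Fin d) (Fin d) ℝ)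
    (L : ℝ) (hL : L = (1 / (T : ℝ)) * ∑ t, (frobNorm (A t))^2)
    (Mstar : Matrix (Fin d) (Fin d) ℝ)
    (hMstar : Mstar ∈ convexHull ℝ (basisSet d lam))
    (hmin : ∀ N ∈ convexHull ℝ (basisSet d lam), objective A Mstar ≤ objective A N)
    (M : ℕ → Matrix (Fin d) (Fin d) ℝ)
    (hM0 : M 0 ∈ basisSet d lam)
    (hMfeas : ∀ k, M k ∈ convexHull ℝ (basisSet d lam))
    (hstep : ∀ k, ∃ B ∈ basisSet d lam,
      (∀ B' ∈ basisSet d lam,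
        frobInner B (objectiveGrad A (M k)) ≤ frobInner B' (objectiveGrad A (M k))) ∧
      (∀ γ ∈ Set.Icc (0:ℝ) 1,
        objective A (M (k + 1)) ≤ objective A (M k + γ • (B - M k)))) :
    ∀ k : ℕ, 1 ≤ k →
      objective A (M k) - objective A Mstar ≤ 16 * L * lam^2 / (k + 2) := by
  refine hdsl_frank_wolfe_convergence_general lam A L hL Mstar hMstar M hMfeas fun k ↦ ?_
  obtain ⟨B, hB, hargmin, hdesc⟩ := hstep k
  exact ⟨B, hB, hargmin, hdesc _ (two_div_add_two_mem_Icc k)⟩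
end
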